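/- For every ε > 0 there exists a sequence (μ_k)_{k∈ℕ} of Borel probability measures on ℝ, each having a continuous everywhere-positive density with respect to Lebesgue measure and each symmetric about its mean, such that the mean of μ_k equals ε for every k (so |∫c dμ_k(c)| ≥ ε), and μ_k((0,∞)) − μ_k((−∞,0)) → 0 as k → ∞ (hence ∫c dμ_k(c) · (μ_k((0,∞)) − μ_k((−∞,0))) → 0). -/

import Mathlib

open MeasureTheory

/-!
For a measure `μ` symmetric about `m`, reflection carries `(-∞, 0)` to `(2 m, ∞)`, so
`μ (0, ∞) - μ (-∞, 0)` is, up to sign, the mass between `0` and `2 m`. For the normal distribution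
with mean `m` and variance `v` this mass is at most `2 |m|` times the peak density `1 / √(2 π v)`,
hence it vanishes as `v → ∞` while the mean stays at `m`.
-/

open Filter ProbabilityTheory Set
open scoped ENNReal NNReal Topology symmDiff

section Reflection

variable {α : Type*} [LinearOrder α]

lemma symmDiff_Ioi_Ioi (a b : α) : Ioi a ∆ Ioi b = uIoc a b := by
  simp only [Set.symmDiff_def, Ioi_sdiff_Ioi, uIoc_eq_union]

variable [AddCommGroup α] [IsOrderedAddMonoid α] [TopologicalSpace α] [OrderClosedTopology α]
  [MeasurableSpace α] [OpensMeasurableSpace α] {μ : Measure α} {c : α}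

lemma measureReal_Iio_of_measurePreserving_const_sub
    (hμ : MeasurePreserving (fun x => c - x) μ μ) (a : α) :
    μ.real (Iio a) = μ.real (Ioi (c - a)) := by
  rw [← hμ.measureReal_preimage measurableSet_Iio.nullMeasurableSet, preimage_const_sub_Iio]

lemma abs_measureReal_Ioi_sub_Iio_le [IsFiniteMeasure μ]
    (hμ : MeasurePreserving (fun x => c - x) μ μ) (a : α) :
    |μ.real (Ioi a) - μ.real (Iio a)| ≤ μ.real (uIoc a (c - a)) := by
  rw [measureReal_Iio_of_measurePreserving_const_sub hμ, ← symmDiff_Ioi_Ioi]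
  exact abs_measureReal_sub_le_measureReal_symmDiff measurableSet_Ioi.nullMeasurableSet
    measurableSet_Ioi.nullMeasurableSet

end Reflection

section Gaussian

lemma continuous_gaussianPDFReal (m : ℝ) (v : ℝ≥0) : Continuous (gaussianPDFReal m v) := by
  rw [gaussianPDFReal_def]
  fun_prop

lemma gaussianPDFReal_le (m : ℝ) (v : ℝ≥0) (x : ℝ) :
    gaussianPDFReal m v x ≤ (√(2 * Real.pi * v))⁻¹ := by
  have exponent_nonpos : -(x - m) ^ 2 / (2 * v) ≤ 0 :=
    div_nonpos_of_nonpos_of_nonneg (neg_nonpos.2 (sq_nonneg _)) (by positivity)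
  exact mul_le_of_le_one_right (by positivity) (Real.exp_le_one_iff.2 exponent_nonpos)

lemma gaussianReal_le_smul_volume (m : ℝ) {v : ℝ≥0} (hv : v ≠ 0) :
    gaussianReal m v ≤ ENNReal.ofReal (√(2 * Real.pi * v))⁻¹ • volume := by
  rw [gaussianReal_of_var_ne_zero m hv, ← withDensity_const]
  exact withDensity_mono (ae_of_all _ fun x => ENNReal.ofReal_le_ofReal (gaussianPDFReal_le m v x))

lemma tendsto_gaussianReal_atTop_var (m : ℝ) {s : Set ℝ} (hs : volume s ≠ ∞) :
    Tendsto (fun v : ℝ≥0 => gaussianReal m v s) atTop (𝓝 0) := by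
  have peak_tendsto : Tendsto (fun v : ℝ≥0 => (√(2 * Real.pi * v))⁻¹) atTop (𝓝 0) :=
    tendsto_inv_atTop_zero.comp <| Real.tendsto_sqrt_atTop.comp <|
      (NNReal.tendsto_coe_atTop.2 tendsto_id).const_mul_atTop (by positivity)
  have bound_tendsto : Tendsto
      (fun v : ℝ≥0 => ENNReal.ofReal (√(2 * Real.pi * v))⁻¹ * volume s) atTop (𝓝 0) := by
    simpa only [ENNReal.ofReal_zero, zero_mul] using
      ENNReal.Tendsto.mul_const (ENNReal.tendsto_ofReal peak_tendsto) (Or.inr hs)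
  refine tendsto_of_tendsto_of_tendsto_of_le_of_le' tendsto_const_nhds bound_tendsto
    (Eventually.of_forall fun _ => zero_le) ?_
  filter_upwards [eventually_ne_atTop 0] with v hv
  exact gaussianReal_le_smul_volume m hv s

lemma measurePreserving_const_sub_gaussianReal (m : ℝ) (v : ℝ≥0) :
    MeasurePreserving (fun x => 2 * m - x) (gaussianReal m v) (gaussianReal m v) where
  measurable := by fun_prop
  map_eq := by rw [gaussianReal_map_const_sub, two_mul, add_sub_cancel_right]

lemma tendsto_gaussianReal_Ioi_sub_Iio_atTop_var (m a : ℝ) :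
    Tendsto (fun v : ℝ≥0 => (gaussianReal m v).real (Ioi a) - (gaussianReal m v).real (Iio a))
      atTop (𝓝 0) := by
  have mass_tendsto :
      Tendsto (fun v : ℝ≥0 => (gaussianReal m v).real (uIoc a (2 * m - a))) atTop (𝓝 0) :=
    (ENNReal.tendsto_toReal ENNReal.zero_ne_top).comp
      (tendsto_gaussianReal_atTop_var m (Real.volume_uIoc ▸ ENNReal.ofReal_ne_top))
  exact squeeze_zero_norm
    (fun v => abs_measureReal_Ioi_sub_Iio_le (measurePreserving_const_sub_gaussianReal m v) a)
    mass_tendsto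

end Gaussian

/-- for every `ε > 0` there is a sequence of Borel probability measures on `ℝ`,
each with a continuous everywhere-positive density and symmetric about its mean `ε`, whose
means all equal `ε`, and for which `μ_k((0,∞)) − μ_k((−∞,0)) → 0`; consequently
`(∫ c dμ_k)·(μ_k((0,∞)) − μ_k((−∞,0))) → 0` as well. -/
theorem statement12 :
    ∀ ε : ℝ, 0 < ε →
      ∃ μ : ℕ → Measure ℝ,
        (∀ k, IsProbabilityMeasure (μ k)) ∧
        (∀ k, ∃ ρ : ℝ → ℝ, Continuous ρ ∧ (∀ x, 0 < ρ x) ∧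
            μ k = volume.withDensity fun x => ENNReal.ofReal (ρ x)) ∧
        (∀ k, Integrable (fun c : ℝ => c) (μ k)) ∧
        (∀ k, (∫ c, c ∂(μ k)) = ε) ∧
        (∀ k, (μ k).map (fun c => c - ε) = (μ k).map (fun c => ε - c)) ∧
        Filter.Tendsto (fun k => ((μ k) (Set.Ioi 0)).toReal - ((μ k) (Set.Iio 0)).toReal)
          Filter.atTop (nhds 0) ∧
        Filter.Tendsto (fun k => (∫ c, c ∂(μ k)) *
            (((μ k) (Set.Ioi 0)).toReal - ((μ k) (Set.Iio 0)).toReal))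
          Filter.atTop (nhds 0) := by
  intro ε _
  have var_ne_zero (k : ℕ) : (k + 1 : ℝ≥0) ≠ 0 := by positivity
  have var_tendsto : Tendsto (fun k : ℕ => (k + 1 : ℝ≥0)) atTop atTop :=
    tendsto_atTop_mono (fun _ => le_self_add) tendsto_natCast_atTop_atTop
  have diff_tendsto := (tendsto_gaussianReal_Ioi_sub_Iio_atTop_var ε 0).comp var_tendsto
  refine ⟨fun k => gaussianReal ε (k + 1), fun _ => inferInstance, fun k => ?density,
    fun _ => (memLp_id_gaussianReal 1).integrable le_rfl, fun _ => integral_id_gaussianReal,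
    fun _ => ?symmetric, diff_tendsto, ?product⟩
  case density =>
    exact ⟨gaussianPDFReal ε (k + 1), continuous_gaussianPDFReal _ _,
      fun x => gaussianPDFReal_pos _ _ x (var_ne_zero k),
      gaussianReal_of_var_ne_zero _ (var_ne_zero k)⟩
  case symmetric => rw [gaussianReal_map_const_sub, gaussianReal_map_sub_const]
  case product =>
    simpa only [integral_id_gaussianReal, measureReal_def, Function.comp_apply, mul_zero] using
      diff_tendsto.const_mul ε
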